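/- Fix a symmetric positive definite m×m real matrix R with unit diagonal. Then the conditional potential function ψ(u) := log det(L(u) + I) is twice continuously differentiable on ℝ^m and its second partial derivatives satisfy, for all u ∈ ℝ^m and all a, b ∈ {1,…,m}: ∂²ψ/∂u_a∂u_b (u) = K(u)_{aa}(1 − K(u)_{aa}) if a = b, and ∂²ψ/∂u_a∂u_b (u) = −(K(u)_{ab})² if a ≠ b, where K(u) := L(u)(L(u) + I)^{-1}. In other words, the Fisher information matrix of the determinantal point process with respect to the item-wise (quality) parameters u equals the corresponding sub-matrix of the Hessian of ψ. -/

import Mathlib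

/-- The kernel `L(u) = D(u) R D(u)` with `D(u) = diag(e^{u₁/2}, …, e^{u_m/2})`. -/
noncomputable def Lmat {m : ℕ} (R : Matrix (Fin m) (Fin m) ℝ) (u : Fin m → ℝ) :
    Matrix (Fin m) (Fin m) ℝ :=
  Matrix.diagonal (fun i => Real.exp (u i / 2)) * R *
    Matrix.diagonal (fun i => Real.exp (u i / 2))

/-- The conditional potential function `ψ(u) = log det(L(u) + I)`. -/
noncomputable def psi {m : ℕ} (R : Matrix (Fin m) (Fin m) ℝ) (u : Fin m → ℝ) : ℝ :=
  Real.log (Lmat R u + 1).det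

/-- The marginal kernel `K(u) = L(u)(L(u) + I)⁻¹`. -/
noncomputable def Kmat {m : ℕ} (R : Matrix (Fin m) (Fin m) ℝ) (u : Fin m → ℝ) :
    Matrix (Fin m) (Fin m) ℝ :=
  Lmat R u * (Lmat R u + 1)⁻¹

namespace HessianAux

open Matrix

/-- `P(u) = diag(e^u) R`. -/
noncomputable def Pm {m : ℕ} (R : Matrix (Fin m) (Fin m) ℝ) (u : Fin m → ℝ) :
    Matrix (Fin m) (Fin m) ℝ :=
  Matrix.diagonal (fun i => Real.exp (u i)) * R

/-- `N(u) = diag(e^u) R + I`. -/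
noncomputable def Nm {m : ℕ} (R : Matrix (Fin m) (Fin m) ℝ) (u : Fin m → ℝ) :
    Matrix (Fin m) (Fin m) ℝ := Pm R u + 1

variable {m : ℕ} (R : Matrix (Fin m) (Fin m) ℝ)

lemma diag_sq (u : Fin m → ℝ) :
    Matrix.diagonal (fun i => Real.exp (u i / 2)) * Matrix.diagonal (fun i => Real.exp (u i / 2))
      = Matrix.diagonal (fun i => Real.exp (u i)) := by
  rw [Matrix.diagonal_mul_diagonal]
  congr 1
  funext i
  rw [← Real.exp_add]
  congr 1
  ring

lemma det_eq (u : Fin m → ℝ) : (Lmat R u + 1).det = (Nm R u).det := by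
  unfold Lmat Nm Pm
  rw [add_comm, Matrix.det_one_add_mul_comm, ← Matrix.mul_assoc, diag_sq, add_comm]

lemma posDef_L1 (hR : R.PosDef) (u : Fin m → ℝ) : (Lmat R u + 1).PosDef := by
  have h : (Lmat R u).PosSemidef := by
    have := hR.posSemidef.conjTranspose_mul_mul_same
      (Matrix.diagonal (fun i => Real.exp (u i / 2)))
    rw [Matrix.diagonal_conjTranspose] at this
    simpa [Lmat] using this
  exact Matrix.PosDef.posSemidef_add h Matrix.PosDef.one

lemma det_pos (hR : R.PosDef) (u : Fin m → ℝ) : 0 < (Nm R u).det := by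
  rw [← det_eq]
  exact (posDef_L1 R hR u).det_pos

lemma unit_N (hR : R.PosDef) (u : Fin m → ℝ) : IsUnit (Nm R u).det :=
  (det_pos R hR u).ne'.isUnit

lemma K_rel (hR : R.PosDef) (u : Fin m → ℝ) (i j : Fin m) :
    (Pm R u * (Nm R u)⁻¹) i j * Real.exp (u j / 2) = Real.exp (u i / 2) * Kmat R u i j := by
  set D : Matrix (Fin m) (Fin m) ℝ := Matrix.diagonal (fun i => Real.exp (u i / 2)) with hD
  have hL : IsUnit (Lmat R u + 1).det := (posDef_L1 R hR u).det_pos.ne'.isUnit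
  have hN := unit_N R hR u
  have h0 : D * Lmat R u = Pm R u * D := by
    unfold Lmat Pm
    rw [← diag_sq u]
    simp only [Matrix.mul_assoc, hD]
  have h1 : D * (Lmat R u + 1) = Nm R u * D := by
    unfold Nm
    rw [Matrix.mul_add, Matrix.add_mul, h0]
    simp
  have h2 : (Nm R u)⁻¹ * D = D * (Lmat R u + 1)⁻¹ := by
    calc (Nm R u)⁻¹ * D = (Nm R u)⁻¹ * (D * (Lmat R u + 1)) * (Lmat R u + 1)⁻¹ := by
          rw [Matrix.mul_assoc, Matrix.mul_assoc D, Matrix.mul_nonsing_inv _ hL, Matrix.mul_one]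
      _ = D * (Lmat R u + 1)⁻¹ := by
          rw [h1, ← Matrix.mul_assoc, Matrix.nonsing_inv_mul _ hN, Matrix.one_mul]
  have h3 : Pm R u * (Nm R u)⁻¹ * D = D * Kmat R u := by
    rw [Matrix.mul_assoc, h2, ← Matrix.mul_assoc, ← h0, Matrix.mul_assoc]
    rfl
  have h4 := congrFun (congrFun h3 i) j
  rwa [hD, Matrix.mul_diagonal, Matrix.diagonal_mul] at h4

lemma K_symm (hsymm : R.IsSymm) (hR : R.PosDef) (u : Fin m → ℝ) : (Kmat R u).IsSymm := by
  have hL : IsUnit (Lmat R u + 1).det := (posDef_L1 R hR u).det_pos.ne'.isUnit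
  have hLs : (Lmat R u)ᵀ = Lmat R u := by
    unfold Lmat
    simp [Matrix.transpose_mul, hsymm.eq, Matrix.mul_assoc]
  have e : Kmat R u = 1 - (Lmat R u + 1)⁻¹ := by
    have := Matrix.mul_nonsing_inv _ hL
    rw [Matrix.add_mul, Matrix.one_mul] at this
    exact eq_sub_of_add_eq this
  unfold Matrix.IsSymm
  rw [e, Matrix.transpose_sub, Matrix.transpose_nonsing_inv, Matrix.transpose_add, hLs]
  simp

lemma Kprime_eq (hR : R.PosDef) (u : Fin m → ℝ) : Pm R u * (Nm R u)⁻¹ = 1 - (Nm R u)⁻¹ := by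
  have := Matrix.mul_nonsing_inv _ (unit_N R hR u)
  nth_rewrite 1 [Nm] at this
  rw [Matrix.add_mul, Matrix.one_mul] at this
  exact eq_sub_of_add_eq this

lemma Kprime_diag (hR : R.PosDef) (u : Fin m → ℝ) (b : Fin m) :
    (Pm R u * (Nm R u)⁻¹) b b = Kmat R u b b := by
  have := K_rel R hR u b b
  have h := Real.exp_pos (u b / 2)
  rw [mul_comm] at this
  exact mul_left_cancel₀ h.ne' this

lemma Kprime_mul (hsymm : R.IsSymm) (hR : R.PosDef) (u : Fin m → ℝ) (a b : Fin m) :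
    (Pm R u * (Nm R u)⁻¹) b a * (Pm R u * (Nm R u)⁻¹) a b = Kmat R u a b ^ 2 := by
  have h1 := K_rel R hR u a b
  have h2 := K_rel R hR u b a
  have hs : Kmat R u b a = Kmat R u a b := (K_symm R hsymm hR u).apply a b
  rw [hs] at h2
  have ha := Real.exp_pos (u a / 2)
  have hb := Real.exp_pos (u b / 2)
  apply mul_right_cancel₀ (mul_pos ha hb).ne'
  linear_combination (Pm R u * (Nm R u)⁻¹) b a * Real.exp (u a / 2) * h1
    + Real.exp (u a / 2) * Kmat R u a b * h2

lemma N_line (u : Fin m → ℝ) (a : Fin m) (t : ℝ) :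
    Nm R (u + t • Pi.single a 1)
      = Nm R u + (Real.exp t - 1) • (Matrix.single a a (1 : ℝ) * Pm R u) := by
  ext i j
  simp only [Nm, Pm, Matrix.add_apply, Matrix.smul_apply, Matrix.diagonal_mul, Pi.add_apply,
    Pi.smul_apply, smul_eq_mul]
  by_cases h : i = a
  · subst h
    rw [Matrix.single_mul_apply_same, Matrix.diagonal_mul, Pi.single_eq_same, mul_one, Real.exp_add]
    ring
  · rw [Matrix.single_mul_apply_of_ne _ _ _ _ _ h, Pi.single_eq_of_ne h]
    simp

lemma det_line (hR : R.PosDef) (u : Fin m → ℝ) (b : Fin m) (t : ℝ) :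
    (Nm R (u + t • Pi.single b 1)).det
      = (Nm R u).det * (1 + (Real.exp t - 1) * Kmat R u b b) := by
  have hN := unit_N R hR u
  have e : Nm R (u + t • Pi.single b 1)
      = (1 + Matrix.replicateCol Unit (Pi.single b 1 : Fin m → ℝ) *
        Matrix.replicateRow Unit ((Real.exp t - 1) • (Pm R u * (Nm R u)⁻¹) b)) * Nm R u := by
    have e1 : Matrix.replicateCol Unit (Pi.single b 1 : Fin m → ℝ) *
        Matrix.replicateRow Unit ((Real.exp t - 1) • (Pm R u * (Nm R u)⁻¹) b)
        = (Real.exp t - 1) • (Matrix.single b b (1 : ℝ) * (Pm R u * (Nm R u)⁻¹)) := by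
      ext i j
      rw [Matrix.smul_apply]
      by_cases h : i = b
      · subst h
        rw [Matrix.single_mul_apply_same]
        simp [Matrix.mul_apply]
      · rw [Matrix.single_mul_apply_of_ne _ _ _ _ _ h]
        simp [Matrix.mul_apply, h]
    rw [e1, N_line, Matrix.add_mul, Matrix.one_mul, Matrix.smul_mul, Matrix.mul_assoc,
      Matrix.mul_assoc, Matrix.nonsing_inv_mul _ hN, Matrix.mul_one]
  rw [e, Matrix.det_mul, Matrix.det_one_add_replicateCol_mul_replicateRow, mul_comm]
  congr 2
  simp only [dotProduct_single, mul_one, Pi.smul_apply, smul_eq_mul]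
  rw [Kprime_diag R hR]

lemma psi_eq (u : Fin m → ℝ) : psi R u = Real.log (Nm R u).det := by
  rw [psi, det_eq]

lemma contDiff_psi (hR : R.PosDef) : ContDiff ℝ 2 (psi R) := by
  have e : psi R = fun u => Real.log (Nm R u).det := funext (psi_eq R)
  rw [e]
  refine ContDiff.log ?_ (fun u => (det_pos R hR u).ne')
  simp only [Matrix.det_apply, Nm, Pm, Matrix.add_apply, Matrix.diagonal_mul]
  fun_prop

lemma line_psi (hR : R.PosDef) (u : Fin m → ℝ) (b : Fin m) :
    HasLineDerivAt ℝ (psi R) (Kmat R u b b) u (Pi.single b 1) := by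
  unfold HasLineDerivAt
  have e : (fun t : ℝ => psi R (u + t • Pi.single b 1))
      = fun t => Real.log ((Nm R u).det * (1 + (Real.exp t - 1) * Kmat R u b b)) := by
    funext t
    rw [psi_eq, det_line R hR]
  rw [e]
  have hd := (det_pos R hR u).ne'
  have h := (((((Real.hasDerivAt_exp 0).sub_const 1).mul_const (Kmat R u b b)).const_add
    1).const_mul (Nm R u).det).log (by simpa using hd)
  refine h.congr_deriv ?_
  rw [Real.exp_zero]
  field_simp
  ring

section
attribute [local instance] Matrix.linftyOpNormedRing Matrix.linftyOpNormedAlgebra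

lemma hasDerivAt_inv (A B : Matrix (Fin m) (Fin m) ℝ) (hA : IsUnit A.det) (i j : Fin m) :
    HasDerivAt (fun t : ℝ => ((A + (Real.exp t - 1) • B)⁻¹) i j) (-(A⁻¹ * B * A⁻¹) i j) 0 := by
  have hU : IsUnit A := (Matrix.isUnit_iff_isUnit_det A).2 hA
  obtain ⟨U, rfl⟩ := hU
  have h1 : HasDerivAt (fun t : ℝ => (U : Matrix (Fin m) (Fin m) ℝ) + (Real.exp t - 1) • B)
      ((1 : ℝ) • B) 0 := by
    have := (((Real.hasDerivAt_exp 0).sub_const 1).smul_const B).const_add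
      (U : Matrix (Fin m) (Fin m) ℝ)
    rw [Real.exp_zero] at this
    exact this
  have h2 := hasFDerivAt_ringInverse (𝕜 := ℝ) U
  have h2b : HasFDerivAt Ring.inverse
    (-ContinuousLinearMap.mulLeftRight ℝ (Matrix (Fin m) (Fin m) ℝ) ↑U⁻¹ ↑U⁻¹)
    ((U : Matrix (Fin m) (Fin m) ℝ) + (Real.exp 0 - 1) • B) := by
    simpa using h2
  have h3 := h2b.comp_hasDerivAt (0 : ℝ) h1
  have h4 := ((Matrix.entryLinearMap ℝ ℝ i j).toContinuousLinearMap.hasFDerivAt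
    (x := Ring.inverse ((U : Matrix (Fin m) (Fin m) ℝ) + (Real.exp 0 - 1) • B))).comp_hasDerivAt
      (0 : ℝ) h3
  have e : ((U⁻¹ : (Matrix (Fin m) (Fin m) ℝ)ˣ) : Matrix (Fin m) (Fin m) ℝ)
      = (U : Matrix (Fin m) (Fin m) ℝ)⁻¹ := Matrix.coe_units_inv U
  have ed : -((U : Matrix (Fin m) (Fin m) ℝ)⁻¹ * B * (U : Matrix (Fin m) (Fin m) ℝ)⁻¹) i j
      = (-(((U⁻¹ : (Matrix (Fin m) (Fin m) ℝ)ˣ) : Matrix (Fin m) (Fin m) ℝ) * ((1 : ℝ) • B) *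
    ((U⁻¹ : (Matrix (Fin m) (Fin m) ℝ)ˣ) : Matrix (Fin m) (Fin m) ℝ))) i j := by
    rw [e, one_smul, Matrix.neg_apply]
  rw [ed]
  simp only [Matrix.nonsing_inv_eq_ringInverse]
  exact h4

end

lemma line_K (hsymm : R.IsSymm) (hR : R.PosDef) (u : Fin m → ℝ) (a b : Fin m) :
    HasLineDerivAt ℝ (fun v => Kmat R v b b)
      (if a = b then Kmat R u a a * (1 - Kmat R u a a) else -(Kmat R u a b) ^ 2)
      u (Pi.single a 1) := by
  unfold HasLineDerivAt
  have e : (fun t : ℝ => Kmat R (u + t • Pi.single a 1) b b) = fun t =>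
      1 - ((Nm R u + (Real.exp t - 1) • (Matrix.single a a (1 : ℝ) * Pm R u))⁻¹) b b := by
    funext t
    rw [← Kprime_diag R hR, Kprime_eq R hR, N_line]
    simp
  rw [e]
  have h := (hasDerivAt_inv (Nm R u) (Matrix.single a a (1 : ℝ) * Pm R u)
    (unit_N R hR u) b b).const_sub 1
  convert h using 1
  have e2 : (Nm R u)⁻¹ = 1 - Pm R u * (Nm R u)⁻¹ := by
    rw [Kprime_eq R hR]; simp
  have e3 : (Nm R u)⁻¹ * (Matrix.single a a (1 : ℝ) * Pm R u) * (Nm R u)⁻¹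
      = (Nm R u)⁻¹ * (Matrix.single a a (1 : ℝ) * (Pm R u * (Nm R u)⁻¹)) := by
    simp only [Matrix.mul_assoc]
  have e4 : ((Nm R u)⁻¹ * (Matrix.single a a (1 : ℝ) * Pm R u) * (Nm R u)⁻¹) b b
      = (Nm R u)⁻¹ b a * (Pm R u * (Nm R u)⁻¹) a b := by
    rw [e3, Matrix.mul_apply, Finset.sum_eq_single a]
    · rw [Matrix.single_mul_apply_same, one_mul]
    · intro c _ hc
      rw [Matrix.single_mul_apply_of_ne _ _ _ _ _ hc, mul_zero]
    · simp
  have e5 : (Nm R u)⁻¹ b a = (1 : Matrix (Fin m) (Fin m) ℝ) b a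
      - (Pm R u * (Nm R u)⁻¹) b a := by
    have := congrFun (congrFun e2 b) a
    simpa using this
  rw [neg_neg, e4, e5, sub_mul, Kprime_mul R hsymm hR]
  split_ifs with hab
  · subst hab
    rw [Kprime_diag R hR, Matrix.one_apply_eq]
    ring
  · rw [Matrix.one_apply_ne (Ne.symm hab)]
    ring

end HessianAux

theorem hessian_psi_eq_fisher_information (m : ℕ)
    (R : Matrix (Fin m) (Fin m) ℝ) (hsymm : R.IsSymm) (hR : R.PosDef)
    (hdiag : ∀ i, R i i = 1) :
    ContDiff ℝ 2 (psi R) ∧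
    ∀ (u : Fin m → ℝ) (a b : Fin m),
      fderiv ℝ (fun v : Fin m → ℝ => fderiv ℝ (psi R) v (Pi.single b 1)) u (Pi.single a 1)
        = if a = b then Kmat R u a a * (1 - Kmat R u a a) else -(Kmat R u a b) ^ 2 := by
  have hc := HessianAux.contDiff_psi R hR
  refine ⟨hc, fun u a b => ?_⟩
  have e : (fun v : Fin m → ℝ => fderiv ℝ (psi R) v (Pi.single b 1))
      = fun v => Kmat R v b b := by
    funext v
    rw [← (hc.differentiable (by norm_num) v).lineDeriv_eq_fderiv]
    exact (HessianAux.line_psi R hR v b).lineDeriv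
  have hd : Differentiable ℝ (fun v : Fin m → ℝ => fderiv ℝ (psi R) v (Pi.single b 1)) := by
    have h1 : ContDiff ℝ 1 (fderiv ℝ (psi R)) := hc.fderiv_right (by norm_num)
    exact (h1.differentiable (by norm_num)).clm_apply (differentiable_const _)
  rw [e] at hd ⊢
  rw [← (hd u).lineDeriv_eq_fderiv]
  exact (HessianAux.line_K R hsymm hR u a b).lineDeriv
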